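/- The truncated-orthant honeycomb limit shape solves the lozenge PDE: the function h(x,y) = (2x−1)(2y+1)/(2(2x+1)) satisfies, at every point with 2x+1 ≠ 0, the equation (h_y − h_y²)·h_{xx} + 2·h_x·h_y·h_{xy} + (h_x − h_x²)·h_{yy} = 0, where h_x, h_y are the first partial derivatives and h_{xx}, h_{xy}, h_{yy} the second partial derivatives of h. -/

import Mathlib

/-!
The height is a product `g(x) * (y + 1/2)`. For `h = g(x) * (y + c)` we have `h_yy = 0`, and the
left-hand side of the equation factors as `h * ((1 - g) * g'' + 2 * g' ^ 2)`. The substitution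
`u = 1 / (1 - g)` linearises the last factor, which becomes `u'' / u ^ 3`; for the truncated
orthant `u(x) = x + 1/2`.
-/

/-- The truncated-orthant honeycomb limit shape height function
`h(x,y) = (2x−1)(2y+1)/(2(2x+1))`. -/
noncomputable def truncOrthantHeight (x y : ℝ) : ℝ :=
  (2 * x - 1) * (2 * y + 1) / (2 * (2 * x + 1))

open Filter Topology

section LozengeOperator

variable {𝕜 : Type*} [NontriviallyNormedField 𝕜]

/-- The left-hand side of the Euler–Lagrange equation for lozenge tilings, as a function of the
height function `h` and the point `(x, y)`. In the mixed derivative, `h` is differentiated first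
in its first argument. -/
noncomputable def lozengeOperator (h : 𝕜 → 𝕜 → 𝕜) (x y : 𝕜) : 𝕜 :=
  (deriv (fun t => h x t) y - (deriv (fun t => h x t) y) ^ 2) *
      deriv (deriv (fun s => h s y)) x +
    2 * deriv (fun s => h s y) x * deriv (fun t => h x t) y *
      deriv (fun t => deriv (fun s => h s t) x) y +
    (deriv (fun s => h s y) x - (deriv (fun s => h s y) x) ^ 2) *
      deriv (deriv (fun t => h x t)) y

theorem lozengeOperator_mul_add_const (g : 𝕜 → 𝕜) (c x y : 𝕜) :
    lozengeOperator (fun s t => g s * (t + c)) x y =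
      g x * (y + c) * ((1 - g x) * deriv (deriv g) x + 2 * deriv g x ^ 2) := by
  have deriv_fst (t : 𝕜) :
      deriv (fun s => g s * (t + c)) = fun s => deriv g s * (t + c) :=
    funext fun s => deriv_mul_const_field (t + c)
  have deriv_snd (a : 𝕜) : deriv (fun t => a * (t + c)) = fun _ => a := by
    funext t
    simp only [deriv_const_mul_field, deriv_add_const, deriv_id'', mul_one]
  simp only [lozengeOperator, deriv_fst, deriv_snd, deriv_mul_const_field, deriv_const]
  ring

variable {g u : 𝕜 → 𝕜} {x : 𝕜}

theorem deriv_deriv_inv_of_eventually_differentiableAt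
    (hu : ∀ᶠ s in 𝓝 x, DifferentiableAt 𝕜 u s) (hu' : DifferentiableAt 𝕜 (deriv u) x)
    (hux : u x ≠ 0) :
    deriv (deriv fun s => (u s)⁻¹) x =
      2 * deriv u x ^ 2 / u x ^ 3 - deriv (deriv u) x / u x ^ 2 := by
  have hu_x : DifferentiableAt 𝕜 u x := hu.self_of_nhds
  have deriv_inv_eq : deriv (fun s => (u s)⁻¹) =ᶠ[𝓝 x] fun s => -deriv u s / u s ^ 2 := by
    filter_upwards [hu, hu_x.continuousAt.eventually_ne hux] with s hs hs0
    exact deriv_fun_inv'' hs hs0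
  rw [deriv_inv_eq.deriv_eq,
    (hu'.hasDerivAt.fun_neg.fun_div (hu_x.hasDerivAt.fun_pow 2) (pow_ne_zero 2 hux)).deriv]
  field_simp
  ring

theorem one_sub_mul_deriv_deriv_add_two_mul_deriv_sq (hg : g =ᶠ[𝓝 x] fun s => 1 - (u s)⁻¹)
    (hu : ∀ᶠ s in 𝓝 x, DifferentiableAt 𝕜 u s) (hu' : DifferentiableAt 𝕜 (deriv u) x)
    (hux : u x ≠ 0) :
    (1 - g x) * deriv (deriv g) x + 2 * deriv g x ^ 2 = deriv (deriv u) x / u x ^ 3 := by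
  have deriv_g : deriv g =ᶠ[𝓝 x] fun s => -deriv (fun r => (u r)⁻¹) s := by
    filter_upwards [hg.deriv] with s hs
    rw [hs, deriv_const_sub]
  rw [hg.eq_of_nhds, deriv_g.deriv_eq, deriv_g.eq_of_nhds, deriv.fun_neg,
    deriv_deriv_inv_of_eventually_differentiableAt hu hu' hux,
    deriv_fun_inv'' hu.self_of_nhds hux]
  field_simp
  ring

end LozengeOperator

theorem truncOrthantHeight_eq_mul_add_half :
    truncOrthantHeight = fun x y => (2 * x - 1) / (2 * x + 1) * (y + 1 / 2) := by
  funext x y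
  rw [truncOrthantHeight, mul_comm 2 (2 * x + 1), ← div_div]
  ring

theorem truncOrthant_slope_eventuallyEq {x : ℝ} (hx : 2 * x + 1 ≠ 0) :
    (fun s : ℝ => (2 * s - 1) / (2 * s + 1)) =ᶠ[𝓝 x] fun s => 1 - (s + 1 / 2)⁻¹ := by
  have hcont : ContinuousAt (fun s : ℝ => 2 * s + 1) x := by fun_prop
  filter_upwards [hcont.eventually_ne hx] with s hs
  field_simp
  ring

/-- The truncated-orthant honeycomb limit shape solves the lozenge PDE: at every point
with `2x + 1 ≠ 0`,
`(h_y − h_y²)·h_{xx} + 2·h_x·h_y·h_{xy} + (h_x − h_x²)·h_{yy} = 0`,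
where subscripts denote partial derivatives. -/
theorem truncOrthant_solves_lozenge_PDE
    (x y : ℝ) (hx : 2 * x + 1 ≠ 0) :
    (deriv (fun t => truncOrthantHeight x t) y -
          (deriv (fun t => truncOrthantHeight x t) y) ^ 2) *
        deriv (deriv (fun s => truncOrthantHeight s y)) x +
      2 * deriv (fun s => truncOrthantHeight s y) x *
        deriv (fun t => truncOrthantHeight x t) y *
        deriv (fun t => deriv (fun s => truncOrthantHeight s t) x) y +
      (deriv (fun s => truncOrthantHeight s y) x -
          (deriv (fun s => truncOrthantHeight s y) x) ^ 2) *
        deriv (deriv (fun t => truncOrthantHeight x t)) y = 0 := by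
  change lozengeOperator truncOrthantHeight x y = 0
  have hux : x + 1 / 2 ≠ 0 := fun h => hx (by linarith)
  have deriv_u : deriv (fun s : ℝ => s + 1 / 2) = fun _ => 1 := by
    funext s
    rw [deriv_add_const, deriv_id'']
  have hu' : DifferentiableAt ℝ (deriv fun s : ℝ => s + 1 / 2) x := by
    rw [deriv_u]
    exact differentiableAt_const 1
  rw [truncOrthantHeight_eq_mul_add_half, lozengeOperator_mul_add_const,
    one_sub_mul_deriv_deriv_add_two_mul_deriv_sq (truncOrthant_slope_eventuallyEq hx)
      (Eventually.of_forall fun s => by fun_prop) hu' hux,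
    deriv_u, deriv_const, zero_div, mul_zero]
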